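/- (Comparison of the RD-CNK and NRK convergence factors.) Let x ∈ ℝⁿ satisfy f(x) ≠ 0 and ∇f_i(x) ≠ 0 for all i, let 0 < η < 1/2, and let h > 0 be a real number. Then ((1 − 2η)/(1 + η²))·δ(x)·h² / max_{i∈{1,…,m}} ‖∇f_i(x)‖² > ((1 − 2η)/(1 + η)²)·h²/( m·Σ_{j=1}^m ‖∇f_j(x)‖² ). -/

import Mathlib

open Finset

/-- The capped threshold `δ(x)` of the RD-CNK method. -/
noncomputable def dlt {n m : ℕ} (f : Fin m → EuclideanSpace ℝ (Fin n) → ℝ)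
    (x : EuclideanSpace ℝ (Fin n)) : ℝ :=
  (1 / 2) * ((⨆ i, (f i x) ^ 2) / (∑ j, (f j x) ^ 2) + 1 / (m : ℝ))

open Classical in
/-- The index set `I(x)` of the RD-CNK method. -/
noncomputable def Iset {n m : ℕ} (f : Fin m → EuclideanSpace ℝ (Fin n) → ℝ)
    (x : EuclideanSpace ℝ (Fin n)) : Finset (Fin m) :=
  Finset.univ.filter fun i => (f i x) ^ 2 ≥ dlt f x * ∑ j, (f j x) ^ 2

/-!
Both factors are compared through `(1 - 2η) / (1 + η²) · h² / (m · ∑ⱼ ‖∇fⱼ‖²)`. The largest `|fᵢ|²`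
is at least the average of the `|fⱼ|²`, so `δ ≥ 1 / m`, and the largest `‖∇fᵢ‖²` is at most their
sum. Strictness comes only from the cross term in `(1 + η)² = 1 + η² + 2η`.
-/

section FiniteFamily

variable {ι M : Type*} [ConditionallyCompleteLattice M]

theorem iSup_pos_of_pos [Finite ι] [Zero M] {a : ι → M} (ha : 0 < a) : 0 < ⨆ i, a i := by
  obtain ⟨-, i, hi⟩ := Pi.lt_def.mp ha
  exact hi.trans_le (le_ciSup (Set.finite_range a).bddAbove i)

variable [Fintype ι] [AddCommMonoid M] [IsOrderedAddMonoid M]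

theorem sum_le_card_nsmul_iSup (a : ι → M) : ∑ i, a i ≤ Fintype.card ι • ⨆ i, a i :=
  sum_le_card_nsmul univ a _ fun i _ => le_ciSup (Set.finite_range a).bddAbove i

theorem iSup_le_sum_of_nonneg [Nonempty ι] {a : ι → M} (ha : 0 ≤ a) : ⨆ i, a i ≤ ∑ i, a i :=
  ciSup_le fun i => single_le_sum (fun j _ => ha j) (mem_univ i)

end FiniteFamily

theorem sq_norm_pos_of_ne_zero {ι E : Type*} [NormedAddGroup E] {v : ι → E} (hv : v ≠ 0) :
    0 < fun i => ‖v i‖ ^ 2 := by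
  obtain ⟨i, hi⟩ := Function.ne_iff.mp hv
  exact Pi.lt_def.mpr ⟨fun j => sq_nonneg ‖v j‖, i, pow_pos (norm_pos_iff.mpr hi) 2⟩

section Threshold

variable {ι : Type*} [Fintype ι]

/-- The capped threshold `δ` of the RD-CNK method as a function of the residual vector `v = f(x)`,
indexed by an arbitrary finite type: the midpoint between the largest share `vᵢ² / ‖v‖²` and the
average share `1 / m`. At `v = 0` the quotient is `0 / 0 = 0`. -/
noncomputable def cappedThreshold (v : ι → ℝ) : ℝ :=
  (1 / 2) * ((⨆ i, v i ^ 2) / (∑ j, v j ^ 2) + 1 / (Fintype.card ι : ℝ))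

theorem dlt_eq_cappedThreshold {n m : ℕ} (f : Fin m → EuclideanSpace ℝ (Fin n) → ℝ)
    (x : EuclideanSpace ℝ (Fin n)) : dlt f x = cappedThreshold fun i => f i x := by
  rw [dlt, cappedThreshold, Fintype.card_fin]

theorem one_div_card_le_iSup_div_sum {a : ι → ℝ} (ha : 0 < ∑ i, a i) :
    1 / (Fintype.card ι : ℝ) ≤ (⨆ i, a i) / ∑ i, a i := by
  have : Nonempty ι := univ_nonempty_iff.mp (nonempty_of_sum_ne_zero ha.ne')
  rw [div_le_div_iff₀ (by positivity) ha, one_mul, mul_comm, ← nsmul_eq_mul]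
  exact sum_le_card_nsmul_iSup a

theorem one_div_card_le_cappedThreshold {v : ι → ℝ} (hv : v ≠ 0) :
    1 / (Fintype.card ι : ℝ) ≤ cappedThreshold v := by
  have hsum : 0 < ∑ i, v i ^ 2 := by
    simpa only [Real.norm_eq_abs, sq_abs] using Fintype.sum_pos (sq_norm_pos_of_ne_zero hv)
  have hmax := one_div_card_le_iSup_div_sum hsum
  rw [cappedThreshold]
  linarith

theorem one_div_card_mul_sum_le_cappedThreshold_div_iSup {v a : ι → ℝ} (hv : v ≠ 0) (ha : 0 < a) :
    1 / (Fintype.card ι * ∑ i, a i) ≤ cappedThreshold v / ⨆ i, a i := by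
  have : Nonempty ι := (Function.ne_iff.mp hv).nonempty
  have hδ := one_div_card_le_cappedThreshold hv
  rw [← div_div]
  exact div_le_div₀ (hδ.trans' (by positivity)) hδ (iSup_pos_of_pos ha)
    (iSup_le_sum_of_nonneg ha.le)

end Threshold

theorem one_sub_two_mul_div_one_add_sq_lt {η : ℝ} (hη0 : 0 < η) (hη1 : η < 1 / 2) :
    (1 - 2 * η) / (1 + η) ^ 2 < (1 - 2 * η) / (1 + η ^ 2) := by
  have hnum : 0 < 1 - 2 * η := by linarith
  have hden : 1 + η ^ 2 < (1 + η) ^ 2 := by linarith [add_sq 1 η]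
  exact div_lt_div_of_pos_left hnum (by positivity) hden

theorem stmt11_general {ι E : Type*} [Fintype ι] [NormedAddCommGroup E] [InnerProductSpace ℝ E]
    [CompleteSpace E] (f : ι → E → ℝ) (g : ι → E) (x : E)
    (hgrad : ∀ i, HasGradientAt (f i) (g i) x) (hfx : (fun i => f i x) ≠ 0) (hg : g ≠ 0)
    {η : ℝ} (hη0 : 0 < η) (hη1 : η < 1 / 2) {h : ℝ} (hh : h ≠ 0) :
    (1 - 2 * η) / (1 + η) ^ 2 * h ^ 2 / (Fintype.card ι * ∑ j, ‖g j‖ ^ 2)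
      < (1 - 2 * η) / (1 + η ^ 2) * cappedThreshold (fun i => f i x) * h ^ 2
        / ⨆ i, ‖g i‖ ^ 2 := by
  have : Nonempty ι := (Function.ne_iff.mp hg).nonempty
  have hgpos := sq_norm_pos_of_ne_zero hg
  have hsum : 0 < ∑ j, ‖g j‖ ^ 2 := Fintype.sum_pos hgpos
  have hnum : 0 ≤ 1 - 2 * η := by linarith
  calc (1 - 2 * η) / (1 + η) ^ 2 * h ^ 2 / (Fintype.card ι * ∑ j, ‖g j‖ ^ 2)
      < (1 - 2 * η) / (1 + η ^ 2) * h ^ 2 / (Fintype.card ι * ∑ j, ‖g j‖ ^ 2) := by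
        gcongr ?_ * _ / _
        exact one_sub_two_mul_div_one_add_sq_lt hη0 hη1
    _ = (1 - 2 * η) / (1 + η ^ 2) * h ^ 2 * (1 / (Fintype.card ι * ∑ j, ‖g j‖ ^ 2)) := by
        rw [mul_one_div]
    _ ≤ (1 - 2 * η) / (1 + η ^ 2) * h ^ 2
          * (cappedThreshold (fun i => f i x) / ⨆ i, ‖g i‖ ^ 2) := by
        gcongr ?_ * ?_
        exact one_div_card_mul_sum_le_cappedThreshold_div_iSup hfx hgpos
    _ = (1 - 2 * η) / (1 + η ^ 2) * cappedThreshold (fun i => f i x) * h ^ 2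
          / ⨆ i, ‖g i‖ ^ 2 := by
        ring

/-- comparison of the RD-CNK and NRK convergence factors. -/
theorem stmt11 {n m : ℕ} (hn : 0 < n) (hm : 0 < m)
    (f : Fin m → EuclideanSpace ℝ (Fin n) → ℝ)
    (g : Fin m → EuclideanSpace ℝ (Fin n) → EuclideanSpace ℝ (Fin n))
    (hgrad : ∀ i y, HasGradientAt (f i) (g i y) y)
    (x : EuclideanSpace ℝ (Fin n)) (hfx : (fun i => f i x) ≠ 0)
    (hg : ∀ i, g i x ≠ 0)
    (η : ℝ) (hη0 : 0 < η) (hη1 : η < 1 / 2)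
    (h : ℝ) (hh : 0 < h) :
    ((1 - 2 * η) / (1 + η ^ 2)) * dlt f x * h ^ 2 / (⨆ i, ‖g i x‖ ^ 2)
      > ((1 - 2 * η) / (1 + η) ^ 2) * h ^ 2 / ((m : ℝ) * ∑ j, ‖g j x‖ ^ 2) := by
  have hgx : (fun i => g i x) ≠ 0 := Function.ne_iff.mpr ⟨⟨0, hm⟩, hg _⟩
  simpa only [dlt_eq_cappedThreshold, Fintype.card_fin] using
    stmt11_general f (fun i => g i x) x (fun i => hgrad i x) hfx hgx hη0 hη1 hh.ne'
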